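/- arXiv:0807.1543 — 4 statements merged into one kernel-verified Lean document; each statement's English description precedes it below -/
import Mathlib

section
/- Let H₁, H₂, H₃ be real n×n matrices with H₁ invertible, let S₁ and S₂ be symmetric positive semidefinite real n×n matrices, let Σ₁ be a symmetric positive definite real n×n matrix, and set A₁ := (I + H₂S₂H₂ᵀ) H₁⁻ᵀ H₃ᵀ, where H₁⁻ᵀ denotes the transpose of H₁⁻¹. Then the following determinant identity holds: det(H₃S₁H₃ᵀ + Σ₁) · det( I + H₁S₁H₁ᵀ + H₂S₂H₂ᵀ − (H₁S₁H₃ᵀ + A₁)(H₃S₁H₃ᵀ + Σ₁)⁻¹(H₃S₁H₁ᵀ + A₁ᵀ) ) = det(Σ₁) · det( I + H₂S₂H₂ᵀ − A₁ Σ₁⁻¹ A₁ᵀ ) · det( I + H₁S₁H₁ᵀ (I + H₂S₂H₂ᵀ)⁻¹ ). (Note that H₃S₁H₃ᵀ + Σ₁ and I + H₂S₂H₂ᵀ are positive definite, hence invertible.) -/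
open Matrix

theorem genie_aux {n : ℕ} (M Q L R : Matrix (Fin n) (Fin n) ℝ) (hM : IsUnit M.det) :
    M.det * (Q - Q * R * M⁻¹ * (L * Q)).det = Q.det * (M - L * Q * R).det := by
  have h1 : Q - Q * R * M⁻¹ * (L * Q) = Q * (1 - R * (M⁻¹ * L * Q)) := by
    simp only [mul_sub, mul_one, Matrix.mul_assoc]
  have h2 : M - L * Q * R = M * (1 - M⁻¹ * L * Q * R) := by
    simp only [mul_sub, mul_one, Matrix.mul_assoc]
    rw [Matrix.mul_nonsing_inv_cancel_left _ _ hM]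
  rw [h1, h2, det_mul, det_mul, Matrix.det_one_sub_mul_comm]
  ring

/-- The central determinant identity in the converse proof of Theorem 1
(noisy-interference sum-rate capacity of the MIMO IC). Here `G₁` plays the role
of `Σ₁` and `A₁ = (I + H₂S₂H₂ᵀ)H₁⁻ᵀH₃ᵀ`. -/
theorem genie_determinant_identity (n : ℕ) (hn : 0 < n)
    (H₁ H₂ H₃ : Matrix (Fin n) (Fin n) ℝ) (hH₁ : IsUnit H₁)
    (S₁ S₂ G₁ : Matrix (Fin n) (Fin n) ℝ)
    (hS₁ : S₁.PosSemidef) (hS₂ : S₂.PosSemidef) (hG₁ : G₁.PosDef) :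
    let A₁ : Matrix (Fin n) (Fin n) ℝ := (1 + H₂ * S₂ * H₂ᵀ) * (H₁⁻¹)ᵀ * H₃ᵀ
    (H₃ * S₁ * H₃ᵀ + G₁).det *
      (1 + H₁ * S₁ * H₁ᵀ + H₂ * S₂ * H₂ᵀ -
        (H₁ * S₁ * H₃ᵀ + A₁) * (H₃ * S₁ * H₃ᵀ + G₁)⁻¹ * (H₃ * S₁ * H₁ᵀ + A₁ᵀ)).det =
    G₁.det * (1 + H₂ * S₂ * H₂ᵀ - A₁ * G₁⁻¹ * A₁ᵀ).det *
      (1 + H₁ * S₁ * H₁ᵀ * (1 + H₂ * S₂ * H₂ᵀ)⁻¹).det := by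
  intro A₁
  have hd : IsUnit H₁.det := (Matrix.isUnit_iff_isUnit_det _).1 hH₁
  have hPS : ∀ (H S : Matrix (Fin n) (Fin n) ℝ), S.PosSemidef → (H * S * Hᵀ).PosSemidef := by
    intro H S hS
    have := hS.mul_mul_conjTranspose_same H
    rwa [conjTranspose_eq_transpose_of_trivial] at this
  have hK : (1 + H₂ * S₂ * H₂ᵀ).PosDef := Matrix.PosDef.one.add_posSemidef (hPS _ _ hS₂)
  have hM : (H₃ * S₁ * H₃ᵀ + G₁).PosDef := Matrix.PosDef.posSemidef_add (hPS _ _ hS₁) hG₁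
  have hKT : (1 + H₂ * S₂ * H₂ᵀ)ᵀ = 1 + H₂ * S₂ * H₂ᵀ := by
    have := hK.isHermitian.eq
    rwa [conjTranspose_eq_transpose_of_trivial] at this
  have hA : A₁ = (1 + H₂ * S₂ * H₂ᵀ) * (H₁⁻¹)ᵀ * H₃ᵀ := rfl
  clear_value A₁
  have e0 : 1 + H₁ * S₁ * H₁ᵀ + H₂ * S₂ * H₂ᵀ
      = H₁ * S₁ * H₁ᵀ + (1 + H₂ * S₂ * H₂ᵀ) := by abel
  rw [e0]
  generalize 1 + H₂ * S₂ * H₂ᵀ = K at *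
  have hKd : IsUnit K.det := hK.det_pos.ne'.isUnit
  obtain ⟨L, rfl⟩ : ∃ L, H₃ = L * H₁ :=
    ⟨H₃ * H₁⁻¹, (Matrix.nonsing_inv_mul_cancel_right _ _ hd).symm⟩
  have hA1 : A₁ = K * Lᵀ := by
    rw [hA, Matrix.transpose_mul, Matrix.mul_assoc, ← Matrix.mul_assoc (H₁⁻¹)ᵀ,
      ← Matrix.transpose_mul, Matrix.mul_nonsing_inv _ hd, Matrix.transpose_one, Matrix.one_mul]
  have hA2 : A₁ᵀ = L * K := by
    rw [hA1, Matrix.transpose_mul, hKT, Matrix.transpose_transpose]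
  rw [hA2, hA1]
  have hM' := genie_aux _ (H₁ * S₁ * H₁ᵀ + K) L Lᵀ hM.det_pos.ne'.isUnit
  have hG' := genie_aux _ K L Lᵀ hG₁.det_pos.ne'.isUnit
  have e1 : H₁ * S₁ * (L * H₁)ᵀ + K * Lᵀ = (H₁ * S₁ * H₁ᵀ + K) * Lᵀ := by
    simp only [Matrix.transpose_mul, Matrix.mul_assoc, Matrix.add_mul]
  have e2 : L * H₁ * S₁ * H₁ᵀ + L * K = L * (H₁ * S₁ * H₁ᵀ + K) := by
    simp only [Matrix.mul_assoc, Matrix.mul_add]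
  have e3 : L * H₁ * S₁ * (L * H₁)ᵀ + G₁ - L * (H₁ * S₁ * H₁ᵀ + K) * Lᵀ
      = G₁ - L * K * Lᵀ := by
    simp only [Matrix.transpose_mul, Matrix.mul_assoc, Matrix.mul_add, Matrix.add_mul]
    abel
  have e4 : (H₁ * S₁ * H₁ᵀ + K).det = (1 + H₁ * S₁ * H₁ᵀ * K⁻¹).det * K.det := by
    rw [← det_mul, Matrix.add_mul, Matrix.one_mul,
      Matrix.nonsing_inv_mul_cancel_right _ _ hKd, add_comm]
  rw [e1, e2, hM', hG', e3, e4]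
  ring
end

section
/- Let H₂, H₄ be invertible real n×n matrices, let S₂ be a symmetric positive semidefinite real n×n matrix, and set A := I + H₂S₂H₂ᵀ (which is positive definite and invertible). Then there exists a symmetric positive definite real n×n matrix Σ satisfying H₄⁻¹(H₄⁻¹)ᵀ = H₂⁻¹ ( I − A Σ⁻¹ Aᵀ ) (H₂⁻¹)ᵀ if and only if H₄ᵀH₄ − H₂ᵀH₂ is positive definite; in that case Σ = Aᵀ ( I − H₂H₄⁻¹(H₄⁻¹)ᵀH₂ᵀ )⁻¹ A is such a solution. -/
open Matrix

lemma genie_aux_s6 {n : ℕ} (K : Matrix (Fin n) (Fin n) ℝ) (h : (1 - K * Kᵀ).PosDef) :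
    (1 - Kᵀ * K).PosDef := by
  have hu : IsUnit (1 - K * Kᵀ).det := (Matrix.isUnit_iff_isUnit_det _).1 h.isUnit
  have hp : (1 + Kᵀ * (1 - K * Kᵀ)⁻¹ * K).PosDef := by
    have := h.inv.posSemidef.conjTranspose_mul_mul_same K
    rw [conjTranspose_eq_transpose_of_trivial] at this
    exact PosDef.one.add_posSemidef this
  have hm : (1 - Kᵀ * K) * (1 + Kᵀ * (1 - K * Kᵀ)⁻¹ * K) = 1 := by
    have h1 : (1 - Kᵀ * K) * Kᵀ = Kᵀ * (1 - K * Kᵀ) := by noncomm_ring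
    have h2 : (1 - Kᵀ * K) * (Kᵀ * (1 - K * Kᵀ)⁻¹ * K) = Kᵀ * K := by
      rw [← mul_assoc, ← mul_assoc, h1, mul_assoc Kᵀ, mul_nonsing_inv _ hu, mul_one]
    rw [mul_add, h2]; simp
  have := hp.inv
  rwa [inv_eq_left_inv hm] at this

lemma genie_conj {n : ℕ} {M B : Matrix (Fin n) (Fin n) ℝ} (h : M.PosDef) (hB : IsUnit B) :
    (Bᵀ * M * B).PosDef := by
  have := (Matrix.IsUnit.posDef_star_left_conjugate_iff (x := M) hB).2 h
  rwa [star_eq_conjTranspose, conjTranspose_eq_transpose_of_trivial] at this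

/-- Equations (60)–(66) in the genie-aided proof of Theorem 3: a symmetric positive
definite genie covariance `Σ` (here `G`) with
`H₄⁻¹H₄⁻ᵀ = H₂⁻¹(I − AG⁻¹Aᵀ)H₂⁻ᵀ` exists iff `H₂ᵀH₂ ≺ H₄ᵀH₄`, in which case
`G = Aᵀ(I − H₂H₄⁻¹H₄⁻ᵀH₂ᵀ)⁻¹A` is such a solution, where `A = I + H₂S₂H₂ᵀ`. -/
theorem genie_exists_iff_weak_interference (n : ℕ) (hn : 0 < n)
    (H₂ H₄ : Matrix (Fin n) (Fin n) ℝ) (hH₂ : IsUnit H₂) (hH₄ : IsUnit H₄)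
    (S₂ : Matrix (Fin n) (Fin n) ℝ) (hS₂ : S₂.PosSemidef) :
    let A : Matrix (Fin n) (Fin n) ℝ := 1 + H₂ * S₂ * H₂ᵀ
    ((∃ G : Matrix (Fin n) (Fin n) ℝ, G.PosDef ∧
        H₄⁻¹ * (H₄⁻¹)ᵀ = H₂⁻¹ * (1 - A * G⁻¹ * Aᵀ) * (H₂⁻¹)ᵀ) ↔
      (H₄ᵀ * H₄ - H₂ᵀ * H₂).PosDef) ∧
    ((H₄ᵀ * H₄ - H₂ᵀ * H₂).PosDef →
      (Aᵀ * ((1 : Matrix (Fin n) (Fin n) ℝ) - H₂ * H₄⁻¹ * (H₄⁻¹)ᵀ * H₂ᵀ)⁻¹ * A).PosDef ∧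
        H₄⁻¹ * (H₄⁻¹)ᵀ = H₂⁻¹ *
          (1 - A * (Aᵀ * ((1 : Matrix (Fin n) (Fin n) ℝ) - H₂ * H₄⁻¹ * (H₄⁻¹)ᵀ * H₂ᵀ)⁻¹ * A)⁻¹ * Aᵀ) *
          (H₂⁻¹)ᵀ) := by
  intro A
  have d2 : IsUnit H₂.det := (Matrix.isUnit_iff_isUnit_det _).1 hH₂
  have d4 : IsUnit H₄.det := (Matrix.isUnit_iff_isUnit_det _).1 hH₄
  have hA : A.PosDef := by
    have := hS₂.mul_mul_conjTranspose_same H₂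
    rw [conjTranspose_eq_transpose_of_trivial] at this
    exact PosDef.one.add_posSemidef this
  have hAu := hA.isUnit
  have dA : IsUnit A.det := (Matrix.isUnit_iff_isUnit_det _).1 hAu
  have dAt : IsUnit Aᵀ.det := by rwa [det_transpose]
  have hAtu : IsUnit Aᵀ := (Matrix.isUnit_iff_isUnit_det _).2 dAt
  clear_value A
  have a2 : H₂ * H₂⁻¹ = 1 := mul_nonsing_inv _ d2
  have b2 : H₂⁻¹ * H₂ = 1 := nonsing_inv_mul _ d2
  have b4 : H₄⁻¹ * H₄ = 1 := nonsing_inv_mul _ d4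
  have a4 : H₄ * H₄⁻¹ = 1 := mul_nonsing_inv _ d4
  have a2t : (H₂⁻¹)ᵀ * H₂ᵀ = 1 := by rw [← transpose_mul, a2, transpose_one]
  have b2t : H₂ᵀ * (H₂⁻¹)ᵀ = 1 := by rw [← transpose_mul, b2, transpose_one]
  have b4t : H₄ᵀ * (H₄⁻¹)ᵀ = 1 := by rw [← transpose_mul, b4, transpose_one]
  have a4t : (H₄⁻¹)ᵀ * H₄ᵀ = 1 := by rw [← transpose_mul, a4, transpose_one]
  have hK : H₂ * H₄⁻¹ * (H₄⁻¹)ᵀ * H₂ᵀ = (H₂ * H₄⁻¹) * (H₂ * H₄⁻¹)ᵀ := by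
    rw [transpose_mul]; simp only [mul_assoc]
  have key1 : H₄ᵀ * (1 - (H₂ * H₄⁻¹)ᵀ * (H₂ * H₄⁻¹)) * H₄ = H₄ᵀ * H₄ - H₂ᵀ * H₂ := by
    have : H₄ᵀ * (1 - (H₂ * H₄⁻¹)ᵀ * (H₂ * H₄⁻¹)) * H₄
        = H₄ᵀ * H₄ - (H₄ᵀ * (H₄⁻¹)ᵀ) * H₂ᵀ * H₂ * (H₄⁻¹ * H₄) := by
      rw [transpose_mul]; noncomm_ring
    rw [this, b4, b4t]; simp
  have key2 : (H₄⁻¹)ᵀ * (H₄ᵀ * H₄ - H₂ᵀ * H₂) * H₄⁻¹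
      = 1 - (H₂ * H₄⁻¹)ᵀ * (H₂ * H₄⁻¹) := by
    have : (H₄⁻¹)ᵀ * (H₄ᵀ * H₄ - H₂ᵀ * H₂) * H₄⁻¹
        = ((H₄⁻¹)ᵀ * H₄ᵀ) * (H₄ * H₄⁻¹) - (H₂ * H₄⁻¹)ᵀ * (H₂ * H₄⁻¹) := by
      rw [transpose_mul]; noncomm_ring
    rw [this, a4, a4t]; simp
  have hu4 : IsUnit H₄⁻¹ := (Matrix.isUnit_nonsing_inv_iff).2 hH₄
  have hback : (H₄ᵀ * H₄ - H₂ᵀ * H₂).PosDef →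
      (Aᵀ * ((1 : Matrix (Fin n) (Fin n) ℝ) - H₂ * H₄⁻¹ * (H₄⁻¹)ᵀ * H₂ᵀ)⁻¹ * A).PosDef ∧
        H₄⁻¹ * (H₄⁻¹)ᵀ = H₂⁻¹ *
          (1 - A * (Aᵀ * ((1 : Matrix (Fin n) (Fin n) ℝ) - H₂ * H₄⁻¹ * (H₄⁻¹)ᵀ * H₂ᵀ)⁻¹ * A)⁻¹ * Aᵀ) *
          (H₂⁻¹)ᵀ := by
    intro h
    have h1 := genie_conj h hu4
    rw [key2] at h1
    have h2 := genie_aux_s6 ((H₂ * H₄⁻¹)ᵀ) (by rwa [transpose_transpose])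
    rw [transpose_transpose, ← hK] at h2
    have dM := (Matrix.isUnit_iff_isUnit_det _).1 h2.isUnit
    refine ⟨genie_conj h2.inv hAu, ?_⟩
    have e : A * (Aᵀ * (1 - H₂ * H₄⁻¹ * (H₄⁻¹)ᵀ * H₂ᵀ)⁻¹ * A)⁻¹ * Aᵀ
        = 1 - H₂ * H₄⁻¹ * (H₄⁻¹)ᵀ * H₂ᵀ := by
      rw [Matrix.mul_inv_rev, Matrix.mul_inv_rev, nonsing_inv_nonsing_inv _ dM,
        ← mul_assoc, mul_nonsing_inv _ dA, one_mul, mul_assoc, nonsing_inv_mul _ dAt, mul_one]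
    rw [e, sub_sub_cancel]
    calc H₄⁻¹ * (H₄⁻¹)ᵀ = (H₂⁻¹ * H₂) * H₄⁻¹ * (H₄⁻¹)ᵀ * (H₂ᵀ * (H₂⁻¹)ᵀ) := by
          rw [b2, b2t]; simp
      _ = _ := by simp only [mul_assoc]
  refine ⟨⟨?_, fun h => ⟨_, hback h⟩⟩, hback⟩
  rintro ⟨G, hG, e⟩
  have e2 : H₂ * H₄⁻¹ * (H₄⁻¹)ᵀ * H₂ᵀ = 1 - A * G⁻¹ * Aᵀ := by
    calc H₂ * H₄⁻¹ * (H₄⁻¹)ᵀ * H₂ᵀ = H₂ * (H₄⁻¹ * (H₄⁻¹)ᵀ) * H₂ᵀ := by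
          simp only [mul_assoc]
      _ = (H₂ * H₂⁻¹) * (1 - A * G⁻¹ * Aᵀ) * ((H₂⁻¹)ᵀ * H₂ᵀ) := by
          rw [e]; simp only [mul_assoc]
      _ = _ := by rw [a2, a2t, one_mul, mul_one]
  have h1 := genie_conj hG.inv hAtu
  rw [transpose_transpose] at h1
  have h2 : (1 - (H₂ * H₄⁻¹) * (H₂ * H₄⁻¹)ᵀ).PosDef := by
    rw [← hK, e2, sub_sub_cancel]; exact h1
  have h3 := genie_conj (genie_aux_s6 _ h2) hH₄
  rwa [key1] at h3
end

section
/- Let B and C be symmetric positive semidefinite real n×n matrices. Then det( I + B (I + C)⁻¹ ) ≤ det( I + B ). (Here I + C is positive definite, hence invertible.) -/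
open Matrix

lemma aux_one_le_det {n : ℕ} (S : Matrix (Fin n) (Fin n) ℝ) (hS : S.PosSemidef) :
    1 ≤ (1 + S).det := by
  have h := hS.1.charpoly_eq
  have h2 : (1 + S).det = ∏ i, (1 + hS.1.eigenvalues i) := by
    have e := Matrix.eval_charpoly S (-1)
    have e2 : (scalar (Fin n) (-1 : ℝ)) - S = -(1 + S) := by
      rw [map_neg, map_one]; abel
    rw [e2, Matrix.det_neg, h, Polynomial.eval_prod] at e
    have e3 : ∀ i, Polynomial.eval (-1) (Polynomial.X - Polynomial.C ((hS.1.eigenvalues i : ℝ)))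
        = (-1) * (1 + hS.1.eigenvalues i) := by
      intro i; simp; ring
    have e4 : ∏ i, Polynomial.eval (-1) (Polynomial.X - Polynomial.C ((hS.1.eigenvalues i : ℝ)))
        = (-1) ^ (Fintype.card (Fin n)) * ∏ i, (1 + hS.1.eigenvalues i) := by
      simp only [e3, Finset.prod_mul_distrib, Finset.prod_const, Finset.card_univ]
    have e5 := e4.symm.trans e
    exact (mul_left_cancel₀ (pow_ne_zero _ (by norm_num)) e5).symm
  rw [h2]
  have : ∏ i : Fin n, (1 : ℝ) ≤ ∏ i, (1 + hS.1.eigenvalues i) :=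
    Finset.prod_le_prod (fun _ _ => zero_le_one)
      (fun i _ => by linarith [hS.eigenvalues_nonneg i])
  simpa using this

lemma aux_factor {n : ℕ} (S : Matrix (Fin n) (Fin n) ℝ) (hS : S.PosSemidef) :
    ∃ K : Matrix (Fin n) (Fin n) ℝ, S = Kᴴ * K := by
  open scoped MatrixOrder in
  exact CStarAlgebra.nonneg_iff_eq_star_mul_self.mp hS.nonneg

lemma aux_det_mono {n : ℕ} (P Q : Matrix (Fin n) (Fin n) ℝ) (hP : P.PosDef)
    (hQ : Q.PosSemidef) : P.det ≤ (P + Q).det := by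
  obtain ⟨K, rfl⟩ := aux_factor Q hQ
  have hu : IsUnit P.det := hP.det_pos.ne'.isUnit
  have e : P + Kᴴ * K = P * (1 + (P⁻¹ * Kᴴ) * K) := by
    rw [mul_add, mul_one, mul_assoc, Matrix.mul_nonsing_inv_cancel_left _ _ hu]
  rw [e, det_mul, det_one_add_mul_comm, ← mul_assoc]
  exact le_mul_of_one_le_right hP.det_pos.le
    (aux_one_le_det _ (hP.inv.posSemidef.mul_mul_conjTranspose_same K))

/-- Step in the proof of Theorem 5 (mixed interference): for positive semidefinite
`B` and `C`, `det(I + B(I + C)⁻¹) ≤ det(I + B)`. -/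
theorem det_one_add_mul_inv_le (n : ℕ) (hn : 0 < n)
    (B C : Matrix (Fin n) (Fin n) ℝ) (hB : B.PosSemidef) (hC : C.PosSemidef) :
    ((1 : Matrix (Fin n) (Fin n) ℝ) + B * (1 + C)⁻¹).det ≤
      ((1 : Matrix (Fin n) (Fin n) ℝ) + B).det := by
  have hD : (1 + C).PosDef := PosDef.one.add_posSemidef hC
  have hu : IsUnit (1 + C).det := hD.det_pos.ne'.isUnit
  have hM := hD.inv
  have h1 := Matrix.mul_nonsing_inv _ hu
  have h2 := Matrix.nonsing_inv_mul _ hu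
  generalize (1 + C)⁻¹ = M at *
  have hMM : (1 - M).PosSemidef := by
    have e : 1 - M = Mᴴ * (C + Cᴴ * C) * M := by
      rw [hM.1.eq, hC.1.eq]
      have a : C * M = 1 - M := by rw [← h1]; noncomm_ring
      have b : M * C = 1 - M := by rw [← h2]; noncomm_ring
      calc 1 - M = (M * (1 + C)) * (C * M) := by rw [h2, one_mul, a]
        _ = _ := by noncomm_ring
    rw [e]
    exact (hC.add (posSemidef_conjTranspose_mul_self C)).conjTranspose_mul_mul_same M
  obtain ⟨G, rfl⟩ := aux_factor B hB
  rw [mul_assoc, det_one_add_mul_comm, det_one_add_mul_comm Gᴴ G]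
  have e : 1 + G * Gᴴ = (1 + G * M * Gᴴ) + G * (1 - M) * Gᴴ := by noncomm_ring
  rw [e]
  exact aux_det_mono _ _ (PosDef.one.add_posSemidef (hM.posSemidef.mul_mul_conjTranspose_same G))
    (hMM.mul_mul_conjTranspose_same G)
end

section
/- Let u and v be positive real numbers. There exist real numbers σ₁ > 0 and σ₂ > 0 satisfying σ₁ ≤ 1 − v²/σ₂ and σ₂ ≤ 1 − u²/σ₁ if and only if u + v ≤ 1. -/
/-- Scalar specialization of Theorem 2: positive `σ₁, σ₂` with
`σ₁ ≤ 1 − v²/σ₂` and `σ₂ ≤ 1 − u²/σ₁` exist iff `u + v ≤ 1`. -/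
theorem scalar_theorem2_condition (u v : ℝ) (hu : 0 < u) (hv : 0 < v) :
    (∃ σ₁ σ₂ : ℝ, 0 < σ₁ ∧ 0 < σ₂ ∧ σ₁ ≤ 1 - v ^ 2 / σ₂ ∧ σ₂ ≤ 1 - u ^ 2 / σ₁) ↔
      u + v ≤ 1 := by
  constructor
  · rintro ⟨a, b, ha, hb, h1, h2⟩
    have h1' : v ^ 2 ≤ (1 - a) * b := (div_le_iff₀ hb).1 (by linarith)
    have h2' : u ^ 2 ≤ (1 - b) * a := (div_le_iff₀ ha).1 (by linarith)
    have ha1 : 0 < 1 - a := by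
      have : 0 < v ^ 2 / b := by positivity
      linarith
    have hb1 : 0 < 1 - b := by
      have : 0 < u ^ 2 / a := by positivity
      linarith
    have hU : u ≤ (a + (1 - b)) / 2 :=
      abs_le_of_sq_le_sq' (by nlinarith [sq_nonneg (a - (1 - b))]) (by linarith) |>.2
    have hV : v ≤ (b + (1 - a)) / 2 :=
      abs_le_of_sq_le_sq' (by nlinarith [sq_nonneg (b - (1 - a))]) (by linarith) |>.2
    linarith
  · intro h
    have hb : 0 < 1 - u := by linarith
    refine ⟨u, 1 - u, hu, hb, ?_, ?_⟩
    · have : v ^ 2 / (1 - u) ≤ 1 - u := by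
        rw [div_le_iff₀ hb]
        nlinarith
      linarith
    · have : u ^ 2 / u = u := by field_simp
      linarith
end
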